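/- Let a ≥ 4 and n be integers with 2a + 7 ≤ n ≤ 3a + 3. Then ρ(G_2(a, n−2a−7, a)) > ρ(G_2(a−1, n−2a−5, a−1)). -/

import Mathlib

open SimpleGraph

/-- Adjacency matrix of a simple graph over ℝ. -/
noncomputable def adjMat {V : Type*} (G : SimpleGraph V) : Matrix V V ℝ :=
  Matrix.of fun i j => @ite ℝ (G.Adj i j) (Classical.propDecidable _) 1 0

/-- Spectral radius: the largest eigenvalue (supremum of the real spectrum)
of the adjacency matrix. -/
noncomputable def specRad {V : Type*} [Fintype V] [DecidableEq V]
    (G : SimpleGraph V) : ℝ :=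
  sSup (spectrum ℝ (adjMat G))

/-- `D` is a dominating set of `G`. -/
def IsDomSet {V : Type*} (G : SimpleGraph V) (D : Finset V) : Prop :=
  ∀ v ∉ D, ∃ u ∈ D, G.Adj u v

/-- The domination number of `G`. -/
noncomputable def domNum {V : Type*} [Fintype V] (G : SimpleGraph V) : ℕ :=
  sInf {k | ∃ D : Finset V, IsDomSet G D ∧ D.card = k}

/-- The tree `G₂(a,b,c)`: the path v1 v4 v5 v2 v6 v7 v3 (vertices `Sum.inl 0, …, Sum.inl 6`
in path order), with `a` pendant edges at v1, `b` pendant edges at v2 and `c` pendant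
edges at v3. -/
def G2graph (a b c : ℕ) : SimpleGraph (Fin 7 ⊕ (Fin a ⊕ Fin b ⊕ Fin c)) :=
  SimpleGraph.fromRel (fun x y =>
    (x = Sum.inl 0 ∧ y = Sum.inl 1) ∨
    (x = Sum.inl 1 ∧ y = Sum.inl 2) ∨
    (x = Sum.inl 2 ∧ y = Sum.inl 3) ∨
    (x = Sum.inl 3 ∧ y = Sum.inl 4) ∨
    (x = Sum.inl 4 ∧ y = Sum.inl 5) ∨
    (x = Sum.inl 5 ∧ y = Sum.inl 6) ∨
    (∃ j : Fin a, x = Sum.inl 0 ∧ y = Sum.inr (Sum.inl j)) ∨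
    (∃ j : Fin b, x = Sum.inl 3 ∧ y = Sum.inr (Sum.inr (Sum.inl j))) ∨
    (∃ j : Fin c, x = Sum.inl 6 ∧ y = Sum.inr (Sum.inr (Sum.inr j))))

/-!
Let `k = a - 1`. Deleting `v2` from `G₂(k + 1, d, e)` leaves as one component the broom with
`k + 1` pendant edges, whose spectral radius `t` therefore lies strictly below that of
`G₂(k + 1, d, e)`. On the other hand, solving the eigenvalue equation of `G₂(k, b, k)` for the
value `t` outwards from `v2` along both branches gives a positive vector, and at `v2` it satisfies
`A x ≤ t x` as soon as `b < k` and `3 ≤ k`; hence the spectral radius of `G₂(k, b, k)` is at most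
`t`.
-/

section Matrix

open Matrix

variable {V K : Type*} [Fintype V] [DecidableEq V]

lemma exists_mulVec_eq_smul_of_mem_spectrum [Field K] {A : Matrix V V K} {t : K}
    (ht : t ∈ spectrum K A) :
    ∃ v ≠ 0, A *ᵥ v = t • v := by
  rw [← spectrum_toLin', ← Module.End.hasEigenvalue_iff_mem_spectrum] at ht
  obtain ⟨v, hv⟩ := ht.exists_hasEigenvector
  exact ⟨v, hv.2, by simpa using hv.apply_eq_smul⟩

-- Evaluate the eigenvalue equation at a vertex maximizing `|v i| / x i`.
lemma abs_le_of_mem_spectrum_of_mulVec_le [Field K] [LinearOrder K] [IsStrictOrderedRing K]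
    {A : Matrix V V K} {x : V → K} {s t : K} (hA : ∀ i j, 0 ≤ A i j) (hx : ∀ i, 0 < x i)
    (hAx : A *ᵥ x ≤ t • x) (hs : s ∈ spectrum K A) : |s| ≤ t := by
  obtain ⟨v, hv₀, hv⟩ := exists_mulVec_eq_smul_of_mem_spectrum hs
  obtain ⟨j, hj : v j ≠ 0⟩ := Function.ne_iff.mp hv₀
  obtain ⟨i, -, hi⟩ := Finset.exists_max_image Finset.univ (fun i ↦ |v i| / x i)
    ⟨j, Finset.mem_univ j⟩
  set M := |v i| / x i
  have hv_le (k : V) : |v k| ≤ M * x k := (div_le_iff₀ (hx k)).mp (hi k (Finset.mem_univ k))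
  have hvi : |v i| = M * x i := (div_mul_cancel₀ _ (hx i).ne').symm
  have hM_pos : 0 < M := (div_pos (abs_pos.mpr hj) (hx j)).trans_le (hi j (Finset.mem_univ j))
  refine le_of_mul_le_mul_right ?_ (mul_pos hM_pos (hx i))
  calc |s| * (M * x i) = |(A *ᵥ v) i| := by rw [hv, Pi.smul_apply, smul_eq_mul, abs_mul, hvi]
    _ ≤ ∑ k, |A i k * v k| := Finset.abs_sum_le_sum_abs _ _
    _ ≤ ∑ k, M * (A i k * x k) := Finset.sum_le_sum fun k _ ↦ by
      rw [abs_mul, abs_of_nonneg (hA i k), mul_left_comm]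
      exact mul_le_mul_of_nonneg_left (hv_le k) (hA i k)
    _ = M * (A *ᵥ x) i := (Finset.mul_sum ..).symm
    _ ≤ M * (t * x i) := mul_le_mul_of_nonneg_left (hAx i) hM_pos.le
    _ = t * (M * x i) := mul_left_comm ..

lemma dotProduct_mulVec_le_sSup_spectrum {A : Matrix V V ℝ} (hA : A.IsHermitian) (x : V → ℝ) :
    x ⬝ᵥ A *ᵥ x ≤ sSup (spectrum ℝ A) * (x ⬝ᵥ x) := by
  set r := sSup (spectrum ℝ A)
  have hpos : (algebraMap ℝ (Matrix V V ℝ) r - A).PosSemidef := by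
    refine posSemidef_iff_isHermitian_and_spectrum_nonneg.mpr
      ⟨(isHermitian_diagonal _).sub hA, ?_⟩
    rw [← spectrum.singleton_sub_eq]
    rintro _ ⟨_, rfl, s, hs, rfl⟩
    exact sub_nonneg.mpr (le_csSup A.finite_spectrum.bddAbove hs)
  simpa [sub_mulVec, dotProduct_sub, Algebra.algebraMap_eq_smul_one, smul_mulVec]
    using hpos.dotProduct_mulVec_nonneg x

end Matrix

section SpectralRadius

open Matrix

variable {V : Type*} {G : SimpleGraph V}

lemma adjMat_eq_adjMatrix [DecidableRel G.Adj] : adjMat G = G.adjMatrix ℝ := by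
  ext i j
  simp [adjMat]

lemma adjMat_nonneg (i j : V) : 0 ≤ adjMat G i j := by
  classical
  rw [adjMat_eq_adjMatrix, adjMatrix_apply]
  split_ifs <;> simp

lemma adjMat_isHermitian : (adjMat G).IsHermitian := by
  classical
  rw [adjMat_eq_adjMatrix, IsHermitian, conjTranspose_eq_transpose_of_trivial]
  exact G.isSymm_adjMatrix

variable [Fintype V] [DecidableEq V] {x : V → ℝ} {t : ℝ}

lemma specRad_le_of_mulVec_le (ht : 0 ≤ t) (hx : ∀ i, 0 < x i)
    (hAx : adjMat G *ᵥ x ≤ t • x) : specRad G ≤ t :=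
  Real.sSup_le (fun _ hs ↦ (le_abs_self _).trans
    (abs_le_of_mem_spectrum_of_mulVec_le adjMat_nonneg hx hAx hs)) ht

lemma lt_specRad_of_le_mulVec (hx : 0 ≤ x) (hAx : t • x ≤ adjMat G *ᵥ x) {i : V}
    (hxi : 0 < x i) (hi : t * x i < (adjMat G *ᵥ x) i) : t < specRad G := by
  have hxx : 0 < x ⬝ᵥ x :=
    Finset.sum_pos' (fun j _ ↦ mul_self_nonneg (x j)) ⟨i, Finset.mem_univ i, mul_pos hxi hxi⟩
  refine lt_of_mul_lt_mul_right ?_ hxx.le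
  calc t * (x ⬝ᵥ x) = x ⬝ᵥ t • x := by rw [dotProduct_smul, smul_eq_mul]
    _ < x ⬝ᵥ adjMat G *ᵥ x := Finset.sum_lt_sum
      (fun j _ ↦ mul_le_mul_of_nonneg_left (hAx j) (hx j))
      ⟨i, Finset.mem_univ i, mul_lt_mul_of_pos_left hi hxi⟩
    _ ≤ specRad G * (x ⬝ᵥ x) := dotProduct_mulVec_le_sSup_spectrum adjMat_isHermitian x

end SpectralRadius

section BranchPoly

/-- The branches of `G₂(a,b,c)` at `v2` are two brooms: a path on three vertices with `a`
(resp. `c`) pendant edges attached to its far end. `branchPoly a` is the characteristic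
polynomial `t ^ (a + 3) - (a + 2) * t ^ (a + 1) + a * t ^ (a - 1)` of such a broom, divided by
`t ^ (a - 1)`. -/
def branchPoly (a t : ℝ) : ℝ :=
  (t ^ 2 - 1) * (t ^ 2 - a) - t ^ 2

variable {a t : ℝ}

lemma add_one_lt_sq_of_branchPoly_nonneg (hat : a < t ^ 2) (h : 0 ≤ branchPoly a t) :
    a + 1 < t ^ 2 := by
  have h_mul : 0 < t ^ 2 * (t ^ 2 - a - 1) := by
    unfold branchPoly at h
    linarith
  linarith [pos_of_mul_pos_right h_mul (sq_nonneg t)]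

lemma exists_branchPoly_eq_zero (ha : 0 ≤ a) :
    ∃ t, 0 < t ∧ a < t ^ 2 ∧ branchPoly a t = 0 := by
  have h_lower : branchPoly a √(a + 1) ≤ 0 := by
    rw [branchPoly, Real.sq_sqrt (by positivity)]
    linarith
  have h_upper : 0 ≤ branchPoly a √(a + 2) := by
    rw [branchPoly, Real.sq_sqrt (by positivity)]
    linarith
  have h_cont : Continuous (branchPoly a) := by unfold branchPoly; fun_prop
  obtain ⟨t, ⟨hat, -⟩, ht⟩ := intermediate_value_Icc (Real.sqrt_le_sqrt (by linarith))
    h_cont.continuousOn ⟨h_lower, h_upper⟩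
  have ht₀ : 0 < t := (Real.sqrt_pos.mpr (by positivity)).trans_le hat
  exact ⟨t, ht₀, by linarith [(Real.sqrt_le_left ht₀.le).mp hat], ht⟩

lemma branchPoly_eq_branchPoly_add_one_add (a t : ℝ) :
    branchPoly a t = branchPoly (a + 1) t + (t ^ 2 - 1) := by
  unfold branchPoly
  ring

-- With `r = t ^ 2 - a - 1`, the hypothesis `h` says `(t ^ 2 - 1) * r = t ^ 2`, so that the
-- quotient is `r ^ 2` and `r` is only slightly larger than `1`.
lemma two_mul_div_branchPoly_le (ha : 3 ≤ a) (hat : a + 1 < t ^ 2)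
    (h : branchPoly (a + 1) t = 0) :
    2 * (t ^ 2 * (t ^ 2 - a - 1) / branchPoly a t) ≤ t ^ 2 - a + 1 := by
  have h_sq := add_one_lt_sq_of_branchPoly_nonneg hat h.ge
  obtain ⟨r, hr⟩ : ∃ r, r = t ^ 2 - a - 1 := ⟨_, rfl⟩
  have h_mul : (t ^ 2 - 1) * r = t ^ 2 := by
    unfold branchPoly at h
    linear_combination h + (t ^ 2 - 1) * hr
  have h_div : t ^ 2 * (t ^ 2 - a - 1) / branchPoly a t = r ^ 2 := by
    rw [branchPoly_eq_branchPoly_add_one_add, h, zero_add, div_eq_iff (by linarith), ← hr]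
    linear_combination (-r) * h_mul
  have hr_le : r ≤ 5 / 4 := by nlinarith
  have hr_sq : 2 * r ^ 2 ≤ r + 2 := by nlinarith
  rw [h_div]
  linarith

end BranchPoly

section G2graph

open Matrix

variable {a b c : ℕ} {t : ℝ}

lemma adjMat_G2graph_mulVec (x : Fin 7 ⊕ (Fin a ⊕ Fin b ⊕ Fin c) → ℝ) :
    adjMat (G2graph a b c) *ᵥ x =
      Sum.elim
        ![x (.inl 1) + ∑ j, x (.inr (.inl j)),
          x (.inl 0) + x (.inl 2),
          x (.inl 1) + x (.inl 3),
          x (.inl 2) + x (.inl 4) + ∑ j, x (.inr (.inr (.inl j))),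
          x (.inl 3) + x (.inl 5),
          x (.inl 4) + x (.inl 6),
          x (.inl 5) + ∑ j, x (.inr (.inr (.inr j)))]
        (Sum.elim (fun _ ↦ x (.inl 0)) (Sum.elim (fun _ ↦ x (.inl 3)) fun _ ↦ x (.inl 6))) := by
  funext i
  rcases i with i | i | i | i
  · fin_cases i <;>
      simp [mulVec, dotProduct, adjMat, G2graph, Fintype.sum_sum_type, Fin.sum_univ_seven]
  all_goals simp [mulVec, dotProduct, adjMat, G2graph, Fintype.sum_sum_type]

-- The test vector is the Perron vector of the branch at `v1`, extended by a small positive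
-- value at `v2` and by zero elsewhere.
lemma lt_specRad_G2graph (b c : ℕ) (ht : 0 < t) (hat : a < t ^ 2) (h : branchPoly a t = 0) :
    t < specRad (G2graph a b c) := by
  have hε : 0 < t ^ 2 - a - 1 := by linarith [add_one_lt_sq_of_branchPoly_nonneg hat h.ge]
  have h_v5 : t * (t * (t ^ 2 - a - 1)) = t ^ 2 - a := by
    unfold branchPoly at h
    linarith
  have h_v2 : 0 ≤ t * (t ^ 2 - a - 1) := by positivity
  refine lt_specRad_of_le_mulVec
    (x := Sum.elim ![t, t ^ 2 - a, t * (t ^ 2 - a - 1), t ^ 2 - a - 1, 0, 0, 0]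
      (Sum.elim (fun _ ↦ 1) (Sum.elim (fun _ ↦ 0) fun _ ↦ 0)))
    ?_ ?_ (i := .inl 2) ?_ ?_
  · rintro (i | i | i | i)
    · fin_cases i <;> simp <;> linarith
    all_goals simp
  · rw [adjMat_G2graph_mulVec]
    rintro (i | i | i | i)
    · fin_cases i <;> simp <;> linarith
    all_goals simp <;> linarith
  · simpa using mul_pos ht hε
  · rw [adjMat_G2graph_mulVec]
    simpa [h_v5] using hε

-- The test vector takes the value `1` at `v2` and satisfies the eigenvalue equation everywhere
-- else, so the hypothesis `h` is the inequality at `v2`.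
lemma specRad_G2graph_le (ht : 0 < t) (hat : a < t ^ 2) (hct : c < t ^ 2)
    (ha : 0 < branchPoly a t) (hc : 0 < branchPoly c t)
    (h : b + t ^ 2 * (t ^ 2 - a - 1) / branchPoly a t +
      t ^ 2 * (t ^ 2 - c - 1) / branchPoly c t ≤ t ^ 2) :
    specRad (G2graph a b c) ≤ t := by
  have ha_v5 := add_one_lt_sq_of_branchPoly_nonneg hat ha.le
  have hc_v6 := add_one_lt_sq_of_branchPoly_nonneg hct hc.le
  set x := (branchPoly a t)⁻¹
  set z := (branchPoly c t)⁻¹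
  have hx : 0 < x := inv_pos.mpr ha
  have hz : 0 < z := inv_pos.mpr hc
  have hx_eq : ((t ^ 2 - 1) * (t ^ 2 - a) - t ^ 2) * x = 1 := mul_inv_cancel₀ ha.ne'
  have hz_eq : ((t ^ 2 - 1) * (t ^ 2 - c) - t ^ 2) * z = 1 := mul_inv_cancel₀ hc.ne'
  have h_v2 : t * (t ^ 2 - a - 1) * x + t * (t ^ 2 - c - 1) * z + b * t⁻¹ ≤ t := by
    refine le_of_mul_le_mul_left ?_ ht
    calc t * (t * (t ^ 2 - a - 1) * x + t * (t ^ 2 - c - 1) * z + b * t⁻¹)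
        = b + t ^ 2 * (t ^ 2 - a - 1) / branchPoly a t +
            t ^ 2 * (t ^ 2 - c - 1) / branchPoly c t := by
              simp only [x, z]; field_simp; ring
      _ ≤ t * t := by rwa [← sq]
  refine specRad_le_of_mulVec_le
    (x := Sum.elim ![t * x, (t ^ 2 - a) * x, t * (t ^ 2 - a - 1) * x, 1,
        t * (t ^ 2 - c - 1) * z, (t ^ 2 - c) * z, t * z]
      (Sum.elim (fun _ ↦ x) (Sum.elim (fun _ ↦ t⁻¹) fun _ ↦ z))) ht.le ?_ ?_
  · have h_path : 0 < t ^ 2 - a ∧ 0 < t ^ 2 - a - 1 ∧ 0 < t ^ 2 - c ∧ 0 < t ^ 2 - c - 1 := by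
      refine ⟨?_, ?_, ?_, ?_⟩ <;> linarith
    rintro (i | _ | _ | _)
    · fin_cases i <;> simp [*, -sub_pos]
    all_goals simp [*]
  · rw [adjMat_G2graph_mulVec]
    rintro (i | i | i | i)
    · fin_cases i <;> simp <;> linarith
    all_goals simp [ht.ne']

end G2graph

theorem specRad_G2_compare_small_n_general {k b : ℕ} (hk : 3 ≤ k) (hb : b < k) (d e : ℕ) :
    specRad (G2graph k b k) < specRad (G2graph (k + 1) d e) := by
  obtain ⟨t, ht, hkt, h_root⟩ := exists_branchPoly_eq_zero (a := k + 1) (by positivity)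
  have hk' : (3 : ℝ) ≤ k := mod_cast hk
  have hb' : (b : ℝ) + 1 ≤ k := mod_cast hb
  have h_pos : 0 < branchPoly k t := by
    rw [branchPoly_eq_branchPoly_add_one_add, h_root]
    linarith
  have h_v2 := two_mul_div_branchPoly_le hk' hkt h_root
  calc specRad (G2graph k b k) ≤ t :=
        specRad_G2graph_le ht (by linarith) (by linarith) h_pos h_pos (by linarith)
    _ < specRad (G2graph (k + 1) d e) :=
        lt_specRad_G2graph d e ht (mod_cast hkt) (mod_cast h_root)

theorem specRad_G2_compare_small_n (a n : ℕ) (ha : 4 ≤ a)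
    (hn1 : 2 * a + 7 ≤ n) (hn2 : n ≤ 3 * a + 3) :
    specRad (G2graph (a - 1) (n - 2 * a - 5) (a - 1)) <
      specRad (G2graph a (n - 2 * a - 7) a) := by
  obtain ⟨k, rfl⟩ : ∃ k, a = k + 1 := ⟨a - 1, by omega⟩
  exact specRad_G2_compare_small_n_general (by omega) (by omega) _ _
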